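/- arXiv:math/0511114 — 3 statements merged into one kernel-verified Lean document; each statement's English description precedes it below -/
import Mathlib

section
/- For every n ≥ 2, the number of pairs (f,g) of permutations of {1,…,n} satisfying Des(g⁻¹) ⊆ Des(f) and Des(g) ⊇ {1,…,n−3} equals 2·3^n − (n+6)·2^{n−1} + 1. -/
/-!
Let `a`, `b` be the last two values of `g`, numbered from `0`. The condition on `Des g` says that
`g` decreases before them, so `g ↦ (a, b)` is a bijection onto ordered pairs of distinct values
(`lastTwo_bijective`). The inverse `g⁻¹` then has descents everywhere except at `a` and `b`, or
except at `b` alone when `a = b + 1` (`mem_Des_inv`; a non-descent at `0` is void).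

Hence the admissible `f` are those decreasing on the blocks `[0,x)`, `[x,y)`, `[y,n)`, where
`{x,y} = {a,b}`, or `x = y = b` in the exceptional case. Their number is the multinomial
coefficient `C(n,y) C(y,x)` (`card_blockDec_blk`): a permutation is uniquely a block-decreasing
one composed with one preserving the blocks, the block-decreasing factor being obtained by sorting.

Summing `C(n,y) C(y,x)` over `x < y < n` gives `3^n - 2·2^n + 1`, which is counted twice, for
`a < b` and `b < a`; the exceptional pairs contribute the correction
`∑_{b < n-1} (C(n,b) - n C(n-1,b)) = 2^n - n 2^(n-1) - 1`.
-/

/-- The descent set of a permutation `f` of `{1,…,n}` (realized as `Equiv.Perm (Fin n)`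
with 1-based positions: position `i` is the index `i-1` of `Fin n`):
`Des f = {i : 1 ≤ i ≤ n-1 and f(i) > f(i+1)}`. -/
def Des {n : ℕ} (f : Equiv.Perm (Fin n)) : Finset ℕ :=
  (Finset.Ico 1 n).filter fun i =>
    ∃ h : i < n, f ⟨i, h⟩ < f ⟨i - 1, Nat.lt_of_le_of_lt (Nat.sub_le i 1) h⟩

/-! ### Permutations decreasing on blocks -/

/-- `f` is strictly decreasing on every fibre ("block") of `bl`. -/
def BlockDec {n : ℕ} (bl : Fin n → Fin 3) (f : Equiv.Perm (Fin n)) : Prop :=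
  ∀ i j, i < j → bl i = bl j → f j < f i

/-- A permutation decreasing on the blocks of a monotone `bl` is recovered from the colouring
`bl ∘ f⁻¹` of its values by sorting. `Tuple.sort` breaks ties in increasing order, hence the
reversal of the values. -/
theorem blockDec_iff_sort {n : ℕ} {bl : Fin n → Fin 3} (hbl : Monotone bl)
    (f : Equiv.Perm (Fin n)) :
    BlockDec bl f ↔ Fin.revPerm * f = Tuple.sort (bl ∘ (f⁻¹ : Equiv.Perm (Fin n)) ∘ Fin.rev) := by
  rw [Tuple.eq_sort_iff]
  have h : (bl ∘ (f⁻¹ : Equiv.Perm (Fin n)) ∘ Fin.rev) ∘ (Fin.revPerm * f : Equiv.Perm (Fin n))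
      = bl := by
    ext i; simp
  rw [h]
  simp [BlockDec, hbl]

/-- A block-decreasing permutation is determined by which block each value belongs to. -/
theorem BlockDec.eq_of_comp_inv_eq {n : ℕ} {bl : Fin n → Fin 3} (hbl : Monotone bl)
    {f g : Equiv.Perm (Fin n)} (hf : BlockDec bl f) (hg : BlockDec bl g)
    (h : bl ∘ (f⁻¹ : Equiv.Perm (Fin n)) = bl ∘ (g⁻¹ : Equiv.Perm (Fin n))) : f = g := by
  rw [blockDec_iff_sort hbl] at hf hg
  rw [← Function.comp_assoc, h, Function.comp_assoc, ← hg] at hf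
  exact mul_left_cancel hf

/-- Every permutation `τ` can be made block-decreasing by rearranging its values inside the
blocks. -/
theorem exists_blockDec {n : ℕ} {bl : Fin n → Fin 3} (hbl : Monotone bl)
    (τ : Equiv.Perm (Fin n)) :
    ∃ f, BlockDec bl f ∧
      bl ∘ (f⁻¹ : Equiv.Perm (Fin n)) = bl ∘ (τ⁻¹ : Equiv.Perm (Fin n)) := by
  set c := bl ∘ (τ⁻¹ : Equiv.Perm (Fin n)) ∘ Fin.rev with hc
  set f : Equiv.Perm (Fin n) := Fin.revPerm * Tuple.sort c with hf
  have h1 : Monotone ((bl ∘ (τ⁻¹ : Equiv.Perm (Fin n))) ∘ f) := Tuple.monotone_sort c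
  have h2 : (bl ∘ (τ⁻¹ : Equiv.Perm (Fin n))) ∘ τ = bl := by ext i; simp
  have h3 := Tuple.unique_monotone h1 (h2.symm ▸ hbl)
  rw [h2] at h3
  have h4 : bl ∘ (f⁻¹ : Equiv.Perm (Fin n)) = bl ∘ (τ⁻¹ : Equiv.Perm (Fin n)) := by
    ext i
    simpa using congrArg Fin.val (congrFun h3 ((f⁻¹ : Equiv.Perm (Fin n)) i)).symm
  refine ⟨f, ?_, h4⟩
  rw [blockDec_iff_sort hbl, ← Function.comp_assoc, h4, Function.comp_assoc, ← hc, hf]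
  ext i; simp

/-- Multinomial count: every permutation factors uniquely as a block-decreasing one times one
which preserves the blocks, and the latter are counted by `DomMulAct.stabilizer_card`. -/
theorem card_blockDec_mul {n : ℕ} {bl : Fin n → Fin 3} (hbl : Monotone bl) :
    Nat.card {f // BlockDec bl f} * ∏ k, (Fintype.card {i // bl i = k}).factorial
      = n.factorial := by
  classical
  rw [← DomMulAct.stabilizer_card, ← Nat.card_eq_fintype_card, ← Nat.card_prod]
  have hn : n.factorial = Nat.card (Equiv.Perm (Fin n)) := by
    rw [Nat.card_eq_fintype_card, Fintype.card_perm, Fintype.card_fin]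
  rw [hn]
  have key : ∀ (f s : Equiv.Perm (Fin n)), bl ∘ s = bl →
      bl ∘ ((f * s)⁻¹ : Equiv.Perm (Fin n)) = bl ∘ (f⁻¹ : Equiv.Perm (Fin n)) := by
    intro f s hs
    ext i
    have := congrFun hs ((f * s)⁻¹ i)
    simpa using congrArg Fin.val this.symm
  refine Nat.card_congr (Equiv.ofBijective (fun p => p.1.1 * p.2.1) ⟨?_, ?_⟩)
  · rintro ⟨⟨f, hf⟩, ⟨s, hs⟩⟩ ⟨⟨g, hg⟩, ⟨t, ht⟩⟩ h
    simp only at h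
    have : f = g := hf.eq_of_comp_inv_eq hbl hg (by rw [← key f s hs, h, key g t ht])
    subst this
    have := mul_left_cancel h
    subst this
    rfl
  · intro τ
    obtain ⟨f, hf, h⟩ := exists_blockDec hbl τ
    refine ⟨⟨⟨f, hf⟩, ⟨f⁻¹ * τ, ?_⟩⟩, by simp⟩
    ext i
    simpa using congrArg Fin.val (congrFun h (τ i))

/-- The block function on `Fin n` for the (possibly empty) blocks `[0,x)`, `[x,y)`, `[y,n)`;
meaningful for `x ≤ y ≤ n`. -/
def blk (n x y : ℕ) (i : Fin n) : Fin 3 :=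
  if (i : ℕ) < x then 0 else if (i : ℕ) < y then 1 else 2

theorem blk_monotone (n x y : ℕ) : Monotone (blk n x y) := by
  intro i j h
  have : (i : ℕ) ≤ j := h
  unfold blk
  split_ifs <;> omega

theorem card_blockDec_blk {n x y : ℕ} (hxy : x ≤ y) (hy : y ≤ n) :
    Nat.card {f // BlockDec (blk n x y) f} = n.choose y * y.choose x := by
  have h := card_blockDec_mul (blk_monotone n x y)
  have hcard : ∀ (k : Fin 3) (u v : ℕ), v ≤ n → (∀ i : Fin n, blk n x y i = k ↔ u ≤ i ∧ (i : ℕ) < v) →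
      Fintype.card {i // blk n x y i = k} = v - u := by
    intro k u v hv hi
    rw [Fintype.card_subtype, ← Nat.card_Ico, ← Finset.card_map Fin.valEmbedding]
    congr 1
    ext a
    simp only [Finset.mem_map, Finset.mem_filter, Finset.mem_univ, true_and, hi, Finset.mem_Ico,
      Fin.valEmbedding_apply]
    constructor
    · rintro ⟨i, h, rfl⟩; exact h
    · intro h; exact ⟨⟨a, by omega⟩, h, rfl⟩
  have h0 := hcard 0 0 x (by omega) (by
    intro i; unfold blk; split_ifs <;> simp <;> omega)
  have h1 := hcard 1 x y (by omega) (by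
    intro i; unfold blk; split_ifs <;> simp <;> omega)
  have h2 := hcard 2 y n (by omega) (by
    intro i; unfold blk; split_ifs <;> simp <;> omega)
  rw [Fin.prod_univ_three, h0, h1, h2] at h
  have e1 := Nat.choose_mul_factorial_mul_factorial hy
  have e2 := Nat.choose_mul_factorial_mul_factorial hxy
  have hpos : 0 < x.factorial * (y - x).factorial * (n - y).factorial := by positivity
  refine Nat.eq_of_mul_eq_mul_right hpos ?_
  rw [Nat.sub_zero] at h
  rw [h, ← e1, ← e2]
  ring

theorem mem_Des {n : ℕ} {f : Equiv.Perm (Fin n)} {i : ℕ} (h1 : 1 ≤ i) (h : i < n) :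
    i ∈ Des f ↔ f ⟨i, h⟩ < f ⟨i - 1, by omega⟩ := by
  simp [Des, h1, h]

/-- Being decreasing on `[0,x)`, `[x,y)`, `[y,n)` means having a descent at every `i` except
possibly `x` and `y`: the 1-based descent position `i` compares the 0-based indices `i - 1`
and `i`, which lie in different blocks only if `i` is `x` or `y`. -/
theorem blockDec_blk_iff {n x y : ℕ} (hxy : x ≤ y) (f : Equiv.Perm (Fin n)) :
    BlockDec (blk n x y) f ↔ ∀ i, 1 ≤ i → i < n → i ≠ x → i ≠ y → i ∈ Des f := by
  constructor
  · intro hf i h1 hn hx hy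
    rw [mem_Des h1 hn]
    refine hf _ _ (by simp [Fin.lt_def]; omega) ?_
    unfold blk
    simp only
    split_ifs <;> first | rfl | omega
  · intro h
    -- Induction on the distance `d + 1` of two indices in one block; all indices in between
    -- lie in that block by monotonicity.
    have key : ∀ d : ℕ, ∀ (i : ℕ) (hi : i + (d + 1) < n),
        blk n x y ⟨i, by omega⟩ = blk n x y ⟨i + (d + 1), hi⟩ →
        f ⟨i + (d + 1), hi⟩ < f ⟨i, by omega⟩ := by
      intro d
      induction d with
      | zero =>
        intro i hi hb
        have := h (i + 1) (by omega) hi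
        rw [mem_Des (by omega) hi] at this
        apply this <;>
        · rintro rfl
          unfold blk at hb
          simp only at hb
          split_ifs at hb <;> omega
      | succ d ih =>
        intro i hi hb
        have m1 := blk_monotone n x y (a := ⟨i, by omega⟩) (b := ⟨i + (d + 1), by omega⟩)
          (by simp [Fin.le_def])
        have m2 := blk_monotone n x y (a := ⟨i + (d + 1), by omega⟩) (b := ⟨i + (d + 1 + 1), by omega⟩)
          (by simp [Fin.le_def])
        have b1 := le_antisymm m1 (m2.trans hb.ge)
        have b2 := b1.symm.trans hb
        refine lt_trans ?_ (ih i (by omega) b1)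
        have := h (i + (d + 1 + 1)) (by omega) hi
        rw [mem_Des (by omega) hi] at this
        apply this <;>
        · intro hh
          unfold blk at b2
          simp only at b2
          split_ifs at b2 <;> omega
    intro i j hij hb
    obtain ⟨i, hi⟩ := i
    obtain ⟨j, hj⟩ := j
    simp only [Fin.lt_def] at hij
    obtain ⟨d, rfl⟩ : ∃ d, j = i + (d + 1) := ⟨j - i - 1, by omega⟩
    exact key d i hj hb

/-! ### Permutations decreasing up to their last two entries -/

theorem blockDec_last_iff {n : ℕ} (g : Equiv.Perm (Fin n)) :
    BlockDec (blk n (n - 2) (n - 1)) g ↔ Finset.Icc 1 (n - 3) ⊆ Des g := by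
  rw [blockDec_blk_iff (by omega)]
  constructor
  · intro h i hi
    rw [Finset.mem_Icc] at hi
    exact h i (by omega) (by omega) (by omega) (by omega)
  · intro h i h1 h2 h3 h4
    exact h (Finset.mem_Icc.2 (by omega))

/-- The last two values of `g`, in order, as 0-based elements of `Fin n`. -/
def lastTwo {n : ℕ} (hn : 2 ≤ n) (g : Equiv.Perm (Fin n)) : Fin n × Fin n :=
  (g ⟨n - 2, by omega⟩, g ⟨n - 1, by omega⟩)

/-- The colouring of the values of `g` by the blocks `[0,n-2)`, `{n-2}`, `{n-1}` carries the
same information as the last two values. -/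
theorem blk_last_comp_inv {n : ℕ} (hn : 2 ≤ n) (g : Equiv.Perm (Fin n)) (v : Fin n) :
    blk n (n - 2) (n - 1) (g⁻¹ v) =
      if v = (lastTwo hn g).1 then 1 else if v = (lastTwo hn g).2 then 2 else 0 := by
  obtain ⟨p, rfl⟩ := g.surjective v
  have hinv : g⁻¹ (g p) = p := by simp
  simp only [lastTwo, hinv, g.injective.eq_iff, blk, Fin.ext_iff]
  have := p.2
  split_ifs <;> first | rfl | omega

/-- The permutations with descents at `1,…,n-3` correspond to the ordered pairs of distinct
values, through their last two entries. -/
theorem lastTwo_bijective {n : ℕ} (hn : 2 ≤ n) :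
    Function.Bijective (fun g : {g : Equiv.Perm (Fin n) // Finset.Icc 1 (n - 3) ⊆ Des g} =>
      (⟨lastTwo hn g.1, by
        simp only [lastTwo, ne_eq, g.1.injective.eq_iff, Fin.mk.injEq]; omega⟩ :
        {p : Fin n × Fin n // p.1 ≠ p.2})) := by
  have hbl := blk_monotone n (n - 2) (n - 1)
  constructor
  · rintro ⟨f, hf⟩ ⟨g, hg⟩ h
    rw [← blockDec_last_iff] at hf hg
    have h' : lastTwo hn f = lastTwo hn g := congrArg Subtype.val h
    refine Subtype.ext (hf.eq_of_comp_inv_eq hbl hg ?_)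
    funext v
    simp only [Function.comp_apply]
    rw [blk_last_comp_inv hn, blk_last_comp_inv hn, h']
  · rintro ⟨⟨a, b⟩, hab⟩
    have h2 : MulAction.IsMultiplyPretransitive (Equiv.Perm (Fin n)) (Fin n) 2 :=
      Equiv.Perm.isMultiplyPretransitive _ _
    rw [MulAction.is_two_pretransitive_iff] at h2
    obtain ⟨τ, h1, h2⟩ := @h2 ⟨n - 2, by omega⟩ ⟨n - 1, by omega⟩ a b
      (by simp only [ne_eq, Fin.mk.injEq]; omega) hab
    obtain ⟨g, hg, h⟩ := exists_blockDec hbl τ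
    have hτ : lastTwo hn τ = (a, b) := Prod.ext h1 h2
    have hgv : ∀ v, blk n (n - 2) (n - 1) (g⁻¹ v) = if v = a then 1 else if v = b then 2 else 0 := by
      intro v
      have := congrFun h v
      simp only [Function.comp_apply] at this
      rw [this, blk_last_comp_inv hn, hτ]
    refine ⟨⟨g, (blockDec_last_iff g).1 hg⟩, Subtype.ext (Prod.ext ?_ ?_)⟩
    · have := hgv (lastTwo hn g).1
      rw [blk_last_comp_inv hn, if_pos rfl] at this
      split_ifs at this <;> first | assumption | exact absurd this (by decide)
    · have hne : (lastTwo hn g).2 ≠ (lastTwo hn g).1 := by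
        simp only [lastTwo, ne_eq, g.injective.eq_iff, Fin.mk.injEq]; omega
      have := hgv (lastTwo hn g).2
      rw [blk_last_comp_inv hn, if_neg hne, if_pos rfl] at this
      split_ifs at this <;> first | assumption | exact absurd this (by decide)

/-- If `g` decreases up to its last two values `a`, `b` (0-based), then `g⁻¹` has a descent at
`i` exactly when the 0-based value `i` precedes `i - 1` in the word of `g`, i.e. unless `i = b`,
or `i = a` while `i - 1 ≠ b`. -/
theorem mem_Des_inv {n : ℕ} (hn : 2 ≤ n) {g : Equiv.Perm (Fin n)}
    (hg : Finset.Icc 1 (n - 3) ⊆ Des g) {i : ℕ} (h1 : 1 ≤ i) (hi : i < n) :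
    i ∈ Des g⁻¹ ↔ i ≠ (lastTwo hn g).2 ∧
      (i = ((lastTwo hn g).1 : ℕ) → i = ((lastTwo hn g).2 : ℕ) + 1) := by
  rw [← blockDec_last_iff] at hg
  rw [mem_Des h1 hi]
  obtain ⟨p, hp⟩ := g.surjective ⟨i, hi⟩
  obtain ⟨q, hq⟩ := g.surjective ⟨i - 1, by omega⟩
  have hpi : (g p : ℕ) = i := by rw [hp]
  have hqi : (g q : ℕ) = i - 1 := by rw [hq]
  have hinv : ∀ r, g⁻¹ (g r) = r := by simp
  rw [← hp, ← hq, hinv, hinv]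
  have ha : i = ((lastTwo hn g).1 : ℕ) ↔ (p : ℕ) = n - 2 := by
    rw [← hpi, ← Fin.ext_iff, lastTwo, g.injective.eq_iff, Fin.ext_iff]
  have hb : i = ((lastTwo hn g).2 : ℕ) ↔ (p : ℕ) = n - 1 := by
    rw [← hpi, ← Fin.ext_iff, lastTwo, g.injective.eq_iff, Fin.ext_iff]
  have hb' : i = ((lastTwo hn g).2 : ℕ) + 1 ↔ (q : ℕ) = n - 1 := by
    have : i = ((lastTwo hn g).2 : ℕ) + 1 ↔ (g q : ℕ) = ((lastTwo hn g).2 : ℕ) := by omega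
    rw [this, ← Fin.ext_iff, lastTwo, g.injective.eq_iff, Fin.ext_iff]
  rw [ne_eq, ha, hb, hb', Fin.lt_def]
  have hpq : (p : ℕ) ≠ q := by
    intro h
    have := Fin.ext h
    subst this
    omega
  have hdec : (p : ℕ) < n - 2 → (q : ℕ) < n - 2 → (p : ℕ) < q := by
    intro h2 h3
    by_contra h4
    have := hg q p (Fin.lt_def.2 (by omega)) (by simp [blk, h2, h3])
    rw [Fin.lt_def] at this
    omega
  have := p.2
  have := q.2
  omega

/-- The number of permutations `f` with `Des g⁻¹ ⊆ Des f`, when `g` decreases up to its last two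
(0-based, distinct) values `a`, `b`. -/
def pairCount (n a b : ℕ) : ℕ :=
  if a < b then n.choose b * b.choose a
  else if a = b + 1 then n.choose b else n.choose a * a.choose b

theorem card_fiber {n : ℕ} (hn : 2 ≤ n) {g : Equiv.Perm (Fin n)}
    (hg : Finset.Icc 1 (n - 3) ⊆ Des g) :
    Nat.card {f : Equiv.Perm (Fin n) // Des g⁻¹ ⊆ Des f} =
      pairCount n (lastTwo hn g).1 (lastTwo hn g).2 := by
  have hsub : ∀ f : Equiv.Perm (Fin n), Des g⁻¹ ⊆ Des f ↔
      ∀ i, 1 ≤ i → i < n → i ≠ (lastTwo hn g).2 →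
        (i = ((lastTwo hn g).1 : ℕ) → i = ((lastTwo hn g).2 : ℕ) + 1) → i ∈ Des f := by
    intro f
    constructor
    · intro h i h1 h2 h3 h4
      exact h ((mem_Des_inv hn hg h1 h2).2 ⟨h3, h4⟩)
    · intro h i hi
      have hi' : 1 ≤ i ∧ i < n := by
        simpa using (Finset.mem_filter.1 hi).1
      obtain ⟨h3, h4⟩ := (mem_Des_inv hn hg hi'.1 hi'.2).1 hi
      exact h i hi'.1 hi'.2 h3 h4
  have hne : ((lastTwo hn g).1 : ℕ) ≠ (lastTwo hn g).2 := by
    rw [ne_eq, ← Fin.ext_iff]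
    simp only [lastTwo, g.injective.eq_iff, Fin.mk.injEq]; omega
  have han := (lastTwo hn g).1.2
  have hbn := (lastTwo hn g).2.2
  generalize ((lastTwo hn g).1 : ℕ) = a at *
  generalize ((lastTwo hn g).2 : ℕ) = b at *
  -- It suffices to name the two positions `x ≤ y` outside which descents of `f` are forced.
  have main : ∀ x y, x ≤ y → y ≤ n →
      (∀ i, (i ≠ b ∧ (i = a → i = b + 1)) ↔ (i ≠ x ∧ i ≠ y)) →
      Nat.card {f : Equiv.Perm (Fin n) // Des g⁻¹ ⊆ Des f} = n.choose y * y.choose x := by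
    intro x y hxy hy h
    rw [← card_blockDec_blk hxy hy]
    refine Nat.card_congr (Equiv.subtypeEquivRight fun f => ?_)
    rw [hsub, blockDec_blk_iff hxy]
    constructor
    · intro H i h1 h2 h3 h4
      exact H i h1 h2 ((h i).2 ⟨h3, h4⟩).1 ((h i).2 ⟨h3, h4⟩).2
    · intro H i h1 h2 h3 h4
      exact H i h1 h2 ((h i).1 ⟨h3, h4⟩).1 ((h i).1 ⟨h3, h4⟩).2
  unfold pairCount
  split_ifs with h1 h2
  · exact main a b h1.le (by omega) (by omega)
  -- For `a = b + 1` only the position `b` is free, so the middle block is empty.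
  · rw [main b b le_rfl (by omega) (by omega), Nat.choose_self, mul_one]
  · exact main b a (by omega) (by omega) (by omega)

theorem card_eq_sum {n : ℕ} (hn : 2 ≤ n) :
    Nat.card {p : Equiv.Perm (Fin n) × Equiv.Perm (Fin n) //
        Des p.2⁻¹ ⊆ Des p.1 ∧ Finset.Icc 1 (n - 3) ⊆ Des p.2} =
      ∑ a ∈ Finset.range n, ∑ b ∈ Finset.range n, if a ≠ b then pairCount n a b else 0 := by
  classical
  let e : {p : Equiv.Perm (Fin n) × Equiv.Perm (Fin n) //
        Des p.2⁻¹ ⊆ Des p.1 ∧ Finset.Icc 1 (n - 3) ⊆ Des p.2} ≃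
      Σ g : {g : Equiv.Perm (Fin n) // Finset.Icc 1 (n - 3) ⊆ Des g},
        {f : Equiv.Perm (Fin n) // Des g.1⁻¹ ⊆ Des f} :=
    { toFun := fun p => ⟨⟨p.1.2, p.2.2⟩, ⟨p.1.1, p.2.1⟩⟩
      invFun := fun s => ⟨(s.2.1, s.1.1), ⟨s.2.2, s.1.2⟩⟩
      left_inv := fun _ => rfl
      right_inv := fun _ => rfl }
  rw [Nat.card_congr e, Nat.card_sigma, Finset.sum_congr rfl (fun g _ => card_fiber hn g.2),
    (lastTwo_bijective hn).sum_comp (fun p : {p : Fin n × Fin n // p.1 ≠ p.2} =>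
      pairCount n p.1.1 p.1.2)]
  rw [← Finset.sum_subtype (Finset.univ.filter fun p : Fin n × Fin n => p.1 ≠ p.2) (by simp)
      (fun p => pairCount n p.1 p.2),
    Finset.sum_filter, Fintype.sum_prod_type, Finset.sum_range]
  refine Finset.sum_congr rfl fun a _ => ?_
  rw [Finset.sum_range]
  simp only [ne_eq, Fin.ext_iff]

/-! ### Evaluation of the sum -/

theorem sum_choose_mul_two_pow_sub_one (n : ℕ) :
    ∑ y ∈ Finset.range n, (n.choose y : ℤ) * (2 ^ y - 1) = 3 ^ n - 2 * 2 ^ n + 1 := by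
  have h3 : ∑ y ∈ Finset.range (n + 1), (n.choose y : ℤ) * 2 ^ y = 3 ^ n := by
    have := add_pow (2 : ℤ) 1 n
    norm_num at this
    rw [this]
    exact Finset.sum_congr rfl fun y _ => mul_comm _ _
  have h2 : ∑ y ∈ Finset.range (n + 1), (n.choose y : ℤ) = 2 ^ n := by
    exact_mod_cast Nat.sum_range_choose n
  rw [Finset.sum_range_succ, Nat.choose_self] at h3 h2
  simp only [mul_sub, Finset.sum_sub_distrib, mul_one]
  push_cast at h3 h2
  linarith

theorem sum_triangle (n : ℕ) :
    ∑ y ∈ Finset.range n, ∑ x ∈ Finset.range n,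
      (if x < y then (n.choose y : ℤ) * y.choose x else 0) = 3 ^ n - 2 * 2 ^ n + 1 := by
  rw [← sum_choose_mul_two_pow_sub_one]
  refine Finset.sum_congr rfl fun y hy => ?_
  have hy' := Finset.mem_range.1 hy
  have hfil : (Finset.range n).filter (fun x => x < y) = Finset.range y := by
    ext x; simp; omega
  rw [← Finset.sum_filter, hfil, ← Finset.mul_sum]
  have h2 : ∑ x ∈ Finset.range (y + 1), (y.choose x : ℤ) = 2 ^ y := by
    exact_mod_cast Nat.sum_range_choose y
  rw [Finset.sum_range_succ, Nat.choose_self] at h2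
  rw [← h2]
  push_cast
  ring

/-- The contribution of the exceptional pairs `a = b + 1`, relative to the generic count. -/
theorem sum_correction (m : ℕ) :
    ∑ b ∈ Finset.range m,
      (((m + 1).choose b : ℤ) - (m + 1).choose (b + 1) * (b + 1).choose b) =
      2 ^ (m + 1) - (m + 1) * 2 ^ m - 1 := by
  have h1 : ∀ b, ((m + 1).choose (b + 1) : ℤ) * (b + 1).choose b = (m + 1) * m.choose b := by
    intro b
    rw [Nat.choose_succ_self_right]
    exact_mod_cast (Nat.add_one_mul_choose_eq m b).symm
  simp only [h1, Finset.sum_sub_distrib, ← Finset.mul_sum]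
  have h2 : ∑ x ∈ Finset.range (m + 1), (m.choose x : ℤ) = 2 ^ m := by
    exact_mod_cast Nat.sum_range_choose m
  have h3 : ∑ x ∈ Finset.range (m + 1 + 1), ((m + 1).choose x : ℤ) = 2 ^ (m + 1) := by
    exact_mod_cast Nat.sum_range_choose (m + 1)
  rw [Finset.sum_range_succ, Nat.choose_self] at h2
  rw [Finset.sum_range_succ, Finset.sum_range_succ, Nat.choose_self,
    Nat.choose_succ_self_right] at h3
  push_cast at h2 h3
  rw [eq_sub_of_add_eq h2, eq_sub_of_add_eq (eq_sub_of_add_eq h3)]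
  ring

theorem sum_pairCount (m : ℕ) :
    ((∑ a ∈ Finset.range (m + 1), ∑ b ∈ Finset.range (m + 1),
      if a ≠ b then pairCount (m + 1) a b else 0 : ℕ) : ℤ) =
      2 * (3 ^ (m + 1) - 2 * 2 ^ (m + 1) + 1) + (2 ^ (m + 1) - (m + 1) * 2 ^ m - 1) := by
  -- The summand is symmetric in `a`, `b` except on the diagonal `a = b + 1`.
  have hsplit : ∀ a b : ℕ, ((if a ≠ b then pairCount (m + 1) a b else 0 : ℕ) : ℤ) =
      (if b < a then ((m + 1).choose a : ℤ) * a.choose b else 0) +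
      (if a < b then ((m + 1).choose b : ℤ) * b.choose a else 0) +
      (if a = b + 1 then
        ((m + 1).choose b : ℤ) - (m + 1).choose (b + 1) * (b + 1).choose b else 0) := by
    intro a b
    unfold pairCount
    rcases lt_trichotomy a b with h | h | h
    · simp [h, h.ne, h.not_gt, show a ≠ b + 1 by omega]
    · simp [h]
    · by_cases h' : a = b + 1
      · subst h'; simp
      · simp [h, h.ne', h.not_gt, h']
  push_cast [hsplit]
  have hdiag : ∑ a ∈ Finset.range (m + 1), ∑ b ∈ Finset.range (m + 1), (if a = b + 1 then
      ((m + 1).choose b : ℤ) - (m + 1).choose (b + 1) * (b + 1).choose b else 0) =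
      2 ^ (m + 1) - (m + 1) * 2 ^ m - 1 := by
    rw [Finset.sum_comm, Finset.sum_range_succ, ← sum_correction]
    simp only [Finset.sum_ite_eq', Finset.mem_range]
    simp only [lt_irrefl, if_false, add_zero]
    refine Finset.sum_congr rfl fun b hb => ?_
    rw [if_pos (by simpa using hb)]
  have hupper := sum_triangle (m + 1)
  rw [Finset.sum_comm] at hupper
  have h := sum_triangle (m + 1)
  simp only [Finset.sum_add_distrib]
  rw [hdiag, h, hupper]
  ring

/-- The number `b_{n,3}(Δ_{n-2})` of pairs `(f,g)` of permutations of `{1,…,n}`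
with `Des (g⁻¹) ⊆ Des f` and `Des g ⊇ {1,…,n-3}` equals `2·3^n - (n+6)·2^{n-1} + 1`. -/
theorem card_pairs_normal_last_superset' (n : ℕ) (hn : 2 ≤ n) :
    (Nat.card {p : Equiv.Perm (Fin n) × Equiv.Perm (Fin n) //
        Des p.2⁻¹ ⊆ Des p.1 ∧ Finset.Icc 1 (n - 3) ⊆ Des p.2} : ℤ) =
      2 * 3 ^ n - (n + 6) * 2 ^ (n - 1) + 1 := by
  rw [card_eq_sum hn]
  obtain ⟨m, rfl⟩ : ∃ m, n = m + 1 := ⟨n - 1, by omega⟩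
  rw [sum_pairCount, Nat.add_sub_cancel]
  push_cast
  ring
end

section
/- For every n ≥ 1, the number of triples (f,g,h) of permutations of {1,…,n} satisfying Des(g⁻¹) ⊆ Des(f), Des(h⁻¹) ⊆ Des(g), and Des(h) ⊇ {1,…,n−2} equals Σ_{i=0}^{n−1} n!/i!. -/
open Finset

namespace DescentTriples

variable {n : ℕ}

/-! ### Permutations with at most one ascent -/

/-- The injective weight on values whose increasing order lists `A` decreasingly, followed by
the complement of `A` decreasingly. -/
def key (A : Finset (Fin n)) (v : Fin n) : ℕ := if v ∈ A then n - v else 2 * n - v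

/-- The permutation whose one-line notation lists `A` decreasingly and then the complement of `A`
decreasingly. -/
def blockPerm (A : Finset (Fin n)) : Equiv.Perm (Fin n) := Tuple.sort (key A)

lemma key_injective (A : Finset (Fin n)) : Function.Injective (key A) := by
  intro v w h
  unfold key at h
  ext
  split_ifs at h <;> omega

lemma strictMono_key_blockPerm (A : Finset (Fin n)) : StrictMono (key A ∘ blockPerm A) :=
  (Tuple.monotone_sort (key A)).strictMono_of_injective
    ((key_injective A).comp (blockPerm A).injective)

lemma eq_blockPerm (A : Finset (Fin n)) (g : Equiv.Perm (Fin n)) (h : StrictMono (key A ∘ g)) :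
    g = blockPerm A := by
  have := Tuple.unique_monotone h.monotone (strictMono_key_blockPerm A).monotone
  ext i
  exact congrArg _ (key_injective A (congrFun this i))

lemma mem_Des {f : Equiv.Perm (Fin n)} {i : ℕ} :
    i ∈ Des f ↔ 1 ≤ i ∧ ∃ h : i < n, f ⟨i, h⟩ < f ⟨i - 1, by omega⟩ := by
  simp only [Des, mem_filter, mem_Ico]
  constructor
  · rintro ⟨⟨h, -⟩, h'⟩
    exact ⟨h, h'⟩
  · rintro ⟨h, h1, h'⟩
    exact ⟨⟨h, h1⟩, h1, h'⟩

/-- The ascents of `(blockPerm A)⁻¹` are the places where `A` is left. -/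
lemma mem_Des_inv_blockPerm (A : Finset (Fin n)) {i : ℕ} :
    i ∈ Des (blockPerm A)⁻¹ ↔ 1 ≤ i ∧ ∃ h : i < n,
      ¬ ((⟨i - 1, by omega⟩ : Fin n) ∈ A ∧ (⟨i, h⟩ : Fin n) ∉ A) := by
  rw [mem_Des]
  refine and_congr_right fun h1 => exists_congr fun h => ?_
  rw [← (strictMono_key_blockPerm A).lt_iff_lt]
  simp only [Function.comp_apply, Equiv.Perm.inv_def, Equiv.apply_symm_apply, key]
  split_ifs <;> simp_all <;> omega

/-- `blockPerm A` lists the elements of `A` in its first `#A` positions. -/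
lemma blockPerm_mem_iff (A : Finset (Fin n)) (i : Fin n) : blockPerm A i ∈ A ↔ (i : ℕ) < #A := by
  have hlow : ∀ i j : Fin n, i ≤ j → blockPerm A j ∈ A → blockPerm A i ∈ A := by
    intro i j hij hj
    have := (strictMono_key_blockPerm A).monotone hij
    simp only [Function.comp_apply, key, hj, if_true] at this
    by_contra hi
    simp only [hi, if_false] at this
    omega
  have hcard : #(univ.filter fun i => blockPerm A i ∈ A) = #A := by
    rw [← card_map (blockPerm A).toEmbedding]
    congr 1
    ext v
    simp only [mem_map, mem_filter, mem_univ, true_and, Equiv.coe_toEmbedding]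
    exact ⟨by rintro ⟨a, h, rfl⟩; exact h, fun h => ⟨(blockPerm A).symm v, by simpa using h, by simp⟩⟩
  constructor
  · intro hi
    have : Iic i ⊆ univ.filter fun i => blockPerm A i ∈ A := by
      intro j hj
      simpa using hlow j i (by simpa using hj) hi
    have := card_le_card this
    rw [hcard, Fin.card_Iic] at this
    omega
  · intro hi
    by_contra hn
    have : (univ.filter fun i => blockPerm A i ∈ A) ⊆ Iio i := by
      intro j hj
      simp only [mem_filter, mem_univ, true_and] at hj
      rw [mem_Iio]
      by_contra hji
      exact hn (hlow i j (not_lt.mp hji) hj)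
    have := card_le_card this
    rw [hcard, Fin.card_Iio] at this
    omega

lemma mem_Des_blockPerm (A : Finset (Fin n)) {i : ℕ} (h1 : 1 ≤ i) (h : i < n) (hA : i ≠ #A) :
    i ∈ Des (blockPerm A) := by
  refine mem_Des.2 ⟨h1, h, ?_⟩
  have hlt : (⟨i - 1, by omega⟩ : Fin n) < ⟨i, h⟩ := by simp [Fin.lt_def]; omega
  have := strictMono_key_blockPerm A hlt
  simp only [Function.comp_apply, key, blockPerm_mem_iff] at this
  rw [Fin.lt_def]
  split_ifs at this <;> omega

/-- A permutation whose only possible ascent is at `j` is a `blockPerm`. -/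
lemma eq_blockPerm_of_Des (g : Equiv.Perm (Fin n)) (j : ℕ)
    (hg : ∀ i, 1 ≤ i → i < n → i ≠ j → i ∈ Des g) :
    g = blockPerm ((univ.filter fun i : Fin n => (i : ℕ) < j).map g.toEmbedding) := by
  apply eq_blockPerm
  obtain _ | m := n
  · intro a; exact a.elim0
  rw [Fin.strictMono_iff_lt_succ]
  intro i
  have hmem : ∀ i, g i ∈ (univ.filter fun i : Fin (m + 1) => (i : ℕ) < j).map g.toEmbedding ↔
      (i : ℕ) < j := by
    intro i
    simp
  simp only [Function.comp_apply, key, hmem, Fin.val_castSucc, Fin.val_succ]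
  by_cases hj : (i : ℕ) + 1 = j
  · split_ifs <;> omega
  · obtain ⟨_, _, h⟩ := mem_Des.1 (hg (i + 1) (by omega) (by omega) hj)
    have h' : g i.succ < g i.castSucc := h
    rw [Fin.lt_def] at h'
    split_ifs <;> omega

/-! ### Reduction to marked words -/

/-- A marking `c` of the letters of the word `f` is valid when every ascent of `f` goes from a
marked letter to an unmarked one. -/
def Valid {n : ℕ} (c : Fin n → Bool) (f : Equiv.Perm (Fin n)) : Prop :=
  ∀ i : ℕ, 1 ≤ i → ∀ h : i < n,
    (c ⟨i - 1, by omega⟩ = true ∧ c ⟨i, h⟩ = false) ∨ f ⟨i, h⟩ < f ⟨i - 1, by omega⟩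

noncomputable instance (c : Fin n → Bool) (f : Equiv.Perm (Fin n)) : Decidable (Valid c f) :=
  Classical.dec _

lemma Des_subset_iff (A : Finset (Fin n)) (f : Equiv.Perm (Fin n)) :
    Des (blockPerm A)⁻¹ ⊆ Des f ↔ Valid (fun i => decide (i ∈ A)) f := by
  constructor
  · intro h i h1 h2
    by_cases hA : (⟨i - 1, by omega⟩ : Fin n) ∈ A ∧ (⟨i, h2⟩ : Fin n) ∉ A
    · left; simpa using hA
    · right
      obtain ⟨_, _, h⟩ := mem_Des.1 (h ((mem_Des_inv_blockPerm A).2 ⟨h1, h2, hA⟩))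
      exact h
  · intro h i hi
    obtain ⟨h1, h2, hA⟩ := (mem_Des_inv_blockPerm A).1 hi
    refine mem_Des.2 ⟨h1, h2, (h i h1 h2).resolve_left ?_⟩
    simpa using hA

/-- The only ascent that `(blockPerm {k}ᶜ)⁻¹` can have is at `k`. Permutations of the form
`blockPerm {k}ᶜ` are the possible third components of a triple. -/
lemma Des_inv_last (k : Fin n) (g : Equiv.Perm (Fin n)) :
    Des (blockPerm ({k}ᶜ : Finset (Fin n)))⁻¹ ⊆ Des g ↔
      ∀ i, 1 ≤ i → i < n → i ≠ k → i ∈ Des g := by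
  constructor
  · intro h i h1 h2 h3
    refine h ((mem_Des_inv_blockPerm _).2 ⟨h1, h2, ?_⟩)
    simp [Fin.ext_iff, h3]
  · intro h i hi
    obtain ⟨h1, h2, hA⟩ := (mem_Des_inv_blockPerm _).1 hi
    refine h i h1 h2 ?_
    rintro rfl
    apply hA
    simp [Fin.ext_iff]
    omega

lemma card_lt_of_ne_univ {A : Finset (Fin n)} (hA : A ≠ univ) : #A < n := by
  simpa using card_lt_card (ssubset_univ_iff.2 hA)

/-- The triples correspond to pairs `(A, f)` with `A` a proper subset and `f` a permutation all of
whose ascents leave `A`. -/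
lemma card_triples (n : ℕ) (hn : 1 ≤ n) :
    Nat.card {t : Equiv.Perm (Fin n) × Equiv.Perm (Fin n) × Equiv.Perm (Fin n) //
        Des t.2.1⁻¹ ⊆ Des t.1 ∧ Des t.2.2⁻¹ ⊆ Des t.2.1 ∧
          Finset.Icc 1 (n - 2) ⊆ Des t.2.2} =
      Nat.card {p : Finset (Fin n) × Equiv.Perm (Fin n) //
        p.1 ≠ univ ∧ Valid (fun i => decide (i ∈ p.1)) p.2} := by
  symm
  have hcc : ∀ k : Fin n, #({k}ᶜ : Finset (Fin n)) = n - 1 := by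
    intro k; simp [card_compl]
  refine Nat.card_congr (Equiv.ofBijective (fun p => ⟨(p.1.2, blockPerm p.1.1,
    blockPerm {(⟨#p.1.1, card_lt_of_ne_univ p.2.1⟩ : Fin n)}ᶜ), ?_, ?_, ?_⟩) ⟨?_, ?_⟩)
  · exact (Des_subset_iff _ _).2 p.2.2
  · rw [Des_inv_last]
    intro i h1 h2 h3
    exact mem_Des_blockPerm _ h1 h2 h3
  · intro i hi
    rw [mem_Icc] at hi
    exact mem_Des_blockPerm _ hi.1 (by omega) (by rw [hcc]; omega)
  · rintro ⟨⟨A, f⟩, hA, hf⟩ ⟨⟨B, f'⟩, hB, hf'⟩ h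
    simp only [Subtype.mk.injEq, Prod.mk.injEq] at h
    obtain ⟨rfl, hg, hh⟩ := h
    have hlast := (blockPerm_mem_iff ({(⟨#A, card_lt_of_ne_univ hA⟩ : Fin n)}ᶜ) ⟨n - 1, by omega⟩)
    have hlast' := (blockPerm_mem_iff ({(⟨#B, card_lt_of_ne_univ hB⟩ : Fin n)}ᶜ) ⟨n - 1, by omega⟩)
    rw [hcc] at hlast hlast'
    simp only [mem_compl, mem_singleton, lt_irrefl, iff_false, not_not] at hlast hlast'
    rw [hh, hlast'] at hlast
    have hcard : #B = #A := congrArg Fin.val hlast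
    simp only [Subtype.mk.injEq, Prod.mk.injEq, and_true]
    ext v
    obtain ⟨i, rfl⟩ := (blockPerm A).surjective v
    rw [blockPerm_mem_iff, hg, blockPerm_mem_iff, hcard]
  · rintro ⟨⟨f, g, h⟩, h1, h2, h3⟩
    simp only at h1 h2 h3
    set k := h ⟨n - 1, by omega⟩ with hk
    have hh : h = blockPerm {k}ᶜ := by
      have := eq_blockPerm_of_Des h (n - 1)
        (fun i a b c => h3 (mem_Icc.2 ⟨a, by omega⟩))
      convert this using 2
      ext v
      obtain ⟨i, rfl⟩ := h.surjective v
      simp [hk, Fin.ext_iff]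
      omega
    rw [hh, Des_inv_last] at h2
    have hg := eq_blockPerm_of_Des g k h2
    set A := (univ.filter fun i : Fin n => (i : ℕ) < k).map g.toEmbedding with hAdef
    have hA : #A = k := by
      rw [hAdef, card_map]
      have : (univ.filter fun i : Fin n => (i : ℕ) < k) = Iio k := by
        ext; simp
      rw [this, Fin.card_Iio]
    have hAu : A ≠ univ := by
      intro hu
      rw [hu, card_univ, Fintype.card_fin] at hA
      omega
    refine ⟨⟨(A, f), hAu, (Des_subset_iff _ _).1 (hg ▸ h1)⟩, ?_⟩
    simp only [Subtype.mk.injEq, Prod.mk.injEq, true_and]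
    refine ⟨hg.symm, ?_⟩
    rw [hh]
    congr

/-! ### Counting validly marked words -/

/-- The word with first letter `t` whose remaining letters are ordered as in `g`. -/
def consPerm (t : Fin (n + 1)) (g : Equiv.Perm (Fin n)) : Equiv.Perm (Fin (n + 1)) :=
  (finSuccEquiv' 0).trans ((Equiv.optionCongr g).trans (finSuccEquiv' t).symm)

@[simp] lemma consPerm_zero (t : Fin (n + 1)) (g : Equiv.Perm (Fin n)) : consPerm t g 0 = t := by
  simp [consPerm]

@[simp] lemma consPerm_succ (t : Fin (n + 1)) (g : Equiv.Perm (Fin n)) (i : Fin n) :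
    consPerm t g i.succ = t.succAbove (g i) := by
  have : finSuccEquiv' (0 : Fin (n + 1)) i.succ = some i := by
    rw [← Fin.zero_succAbove, finSuccEquiv'_succAbove]
  simp [consPerm, this]

lemma consPerm_bijective :
    Function.Bijective fun p : Fin (n + 1) × Equiv.Perm (Fin n) => consPerm p.1 p.2 := by
  rw [Fintype.bijective_iff_injective_and_card]
  constructor
  · rintro ⟨t, g⟩ ⟨t', g'⟩ h
    have h0 := congrArg (fun f : Equiv.Perm (Fin (n + 1)) => f 0) h
    simp only [consPerm_zero] at h0
    subst h0
    congr
    ext i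
    have hi := congrArg (fun f : Equiv.Perm (Fin (n + 1)) => f i.succ) h
    simp only [consPerm_succ] at hi
    rw [Fin.succAbove_right_injective hi]
  · simp [Fintype.card_perm, Nat.factorial_succ]

lemma succAbove_lt_self (t : Fin (n + 1)) (a : Fin n) : t.succAbove a < t ↔ (a : ℕ) < t := by
  rw [Fin.succAbove_lt_iff_castSucc_lt, Fin.lt_def, Fin.val_castSucc]

lemma valid_cons (b : Bool) (c : Fin (n + 1) → Bool) (t : Fin (n + 2))
    (g : Equiv.Perm (Fin (n + 1))) :
    Valid (Fin.cons b c : Fin (n + 2) → Bool) (consPerm t g) ↔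
      ((b = true ∧ c 0 = false) ∨ (g 0 : ℕ) < t) ∧ Valid c g := by
  have e0 : (⟨0, by omega⟩ : Fin (n + 2)) = 0 := rfl
  have e0' : (⟨0, by omega⟩ : Fin (n + 1)) = 0 := rfl
  have es : ∀ i (h : i + 1 < n + 2), (⟨i + 1, h⟩ : Fin (n + 2)) = Fin.succ ⟨i, by omega⟩ :=
    fun i h => rfl
  constructor
  · intro h
    constructor
    · have := h 1 le_rfl (by omega)
      simpa only [Nat.sub_self, e0, e0', es 0, Fin.cons_zero, Fin.cons_succ, consPerm_zero,
        consPerm_succ, succAbove_lt_self] using this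
    · intro i h1 h2
      obtain ⟨j, rfl⟩ : ∃ j, i = j + 1 := ⟨i - 1, by omega⟩
      have := h (j + 1 + 1) (by omega) (by omega)
      simpa only [Nat.add_sub_cancel, es (j + 1), es j, Fin.cons_succ, consPerm_succ,
        Fin.succAbove_lt_succAbove_iff] using this
  · rintro ⟨h0, h⟩ i h1 h2
    obtain ⟨j, rfl⟩ : ∃ j, i = j + 1 := ⟨i - 1, by omega⟩
    obtain _ | j := j
    · simpa only [Nat.sub_self, e0, e0', es 0, Fin.cons_zero, Fin.cons_succ, consPerm_zero,
        consPerm_succ, succAbove_lt_self, Nat.zero_add] using h0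
    · have := h (j + 1) (by omega) (by omega)
      simpa only [Nat.add_sub_cancel, es (j + 1), es j, Fin.cons_succ, consPerm_succ,
        Fin.succAbove_lt_succAbove_iff] using this

/-- Closed form for the number of validly marked words of length `r + 1` whose first letter has the
given mark and exceeds exactly `t` other letters; that it counts them is `weighted_count`. -/
def firstCount (r : ℕ) : Bool → ℕ → ℕ
  | true, t => ∑ c ∈ range (r + 1), t.choose c * (r - c).factorial
  | false, t => ∑ c ∈ range (r + 1), c * t.choose c * (r - c).factorial + if t = r then 1 else 0

/-- Hockey-stick summation over `t`. -/
lemma sum_choose (m c : ℕ) : ∑ j ∈ range m, j.choose c = m.choose (c + 1) := by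
  induction m with
  | zero => simp
  | succ m ih => rw [sum_range_succ, ih, Nat.choose_succ_succ, add_comm]

lemma sum_true (r m : ℕ) : ∑ j ∈ range m, firstCount r true j =
    ∑ c ∈ range (r + 1), m.choose (c + 1) * (r - c).factorial := by
  simp only [firstCount]
  rw [sum_comm]
  simp only [← sum_mul, sum_choose]

lemma sum_false (r m : ℕ) (hm : m ≤ r + 1) : ∑ j ∈ range m, firstCount r false j =
    ∑ c ∈ range (r + 1), c * m.choose (c + 1) * (r - c).factorial +
      if m = r + 1 then 1 else 0 := by
  simp only [firstCount]
  rw [sum_add_distrib, sum_comm]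
  simp only [← sum_mul, ← mul_sum, sum_choose]
  congr 1
  rw [sum_ite_eq']
  simp only [mem_range]
  split_ifs <;> omega

/-- There are `n!` validly marked words starting with an unmarked letter: the sum telescopes,
since `c / (c + 1)! = 1 / c! - 1 / (c + 1)!`. -/
lemma sum_false_full (r : ℕ) : ∑ j ∈ range (r + 1), firstCount r false j = (r + 1).factorial := by
  rw [sum_false r _ le_rfl, if_pos rfl]
  have key : ∀ k, k ≤ r + 1 → ∑ c ∈ range k, c * (r + 1).choose (c + 1) * (r - c).factorial +
      (r + 1).choose k * (r + 1 - k).factorial = (r + 1).factorial := by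
    intro k
    induction k with
    | zero => simp
    | succ k ih =>
      intro hk
      rw [← ih (by omega), sum_range_succ]
      have h1 : (r + 1).choose (k + 1) * (k + 1) = (r + 1).choose k * (r + 1 - k) :=
        Nat.choose_succ_right_eq _ _
      have h2 : (r + 1 - k).factorial = (r + 1 - k) * (r - k).factorial := by
        rw [show r + 1 - k = (r - k) + 1 by omega, Nat.factorial_succ]
      rw [h2, ← mul_assoc, ← h1, show r + 1 - (k + 1) = r - k by omega]
      ring
  have := key (r + 1) le_rfl
  simpa using this

lemma firstCount_true_succ (r t : ℕ) : firstCount (r + 1) true t =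
    ∑ j ∈ range (r + 1), firstCount r false j + ∑ j ∈ range t, firstCount r true j := by
  rw [sum_false_full, sum_true]
  simp only [firstCount]
  rw [sum_range_succ', add_comm]
  simp

lemma firstCount_false_succ (r t : ℕ) (ht : t ≤ r + 1) : firstCount (r + 1) false t =
    ∑ j ∈ range t, firstCount r false j + ∑ j ∈ range t, firstCount r true j := by
  rw [sum_false r t ht, sum_true]
  simp only [firstCount]
  rw [sum_range_succ', add_right_comm (∑ c ∈ range (r + 1), c * _ * _),
    ← sum_add_distrib]
  simp only [zero_mul, add_zero]
  congr 1
  refine sum_congr rfl fun c _ => ?_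
  rw [show r + 1 - (c + 1) = r - c by omega]
  ring

lemma sum_ite_lt (r t : ℕ) (ht : t ≤ r) (F : ℕ → ℕ) :
    (∑ j : Fin r, if (j : ℕ) < t then F j else 0) = ∑ j ∈ range t, F j := by
  rw [Fin.sum_univ_eq_sum_range (fun j => if j < t then F j else 0), ← sum_filter]
  congr 1
  ext j
  simp
  omega

/-- Weighted enumeration of the validly marked words by the mark and value of their first letter.
The arbitrary weight `F` is what makes the induction on the length go through. -/
lemma weighted_count (r : ℕ) : ∀ F : Bool → ℕ → ℕ,
    (∑ p : (Fin (r + 1) → Bool) × Equiv.Perm (Fin (r + 1)),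
      if Valid p.1 p.2 then F (p.1 0) (p.2 0) else 0) =
    ∑ b : Bool, ∑ t : Fin (r + 1), firstCount r b t * F b t := by
  induction r with
  | zero =>
    intro F
    have hv : ∀ (c : Fin 1 → Bool) (f : Equiv.Perm (Fin 1)), Valid c f := by
      intro c f i h1 h2
      omega
    simp only [hv, if_true]
    rw [Fintype.sum_prod_type, ← (Equiv.funUnique (Fin 1) Bool).symm.sum_comp]
    simp [firstCount]
  | succ r ih =>
    intro F
    have hbij : Function.Bijective
        (fun q : (Bool × (Fin (r + 1) → Bool)) × (Fin (r + 2) × Equiv.Perm (Fin (r + 1))) =>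
          ((Fin.cons q.1.1 q.1.2 : Fin (r + 2) → Bool), consPerm q.2.1 q.2.2)) :=
      Function.Bijective.prodMap (Fin.consEquiv (fun _ : Fin (r + 2) => Bool)).bijective
        consPerm_bijective
    rw [← hbij.sum_comp]
    simp only [Fintype.sum_prod_type, valid_cons, Fin.cons_zero, consPerm_zero]
    refine sum_congr rfl fun b _ => ?_
    rw [sum_comm]
    refine sum_congr rfl fun t _ => ?_
    have := ih (fun b' t' => if (b = true ∧ b' = false) ∨ t' < (t : ℕ) then F b t else 0)
    rw [Fintype.sum_prod_type] at this
    simp only [← ite_and] at this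
    simp only [and_comm (a := _ ∨ _)]
    rw [this]
    simp only [Fintype.sum_bool, mul_ite, mul_zero]
    cases b
    · simp only [Bool.false_eq_true, false_and, false_or]
      rw [sum_ite_lt _ _ (by omega) (fun j => firstCount r true j * F false t),
        sum_ite_lt _ _ (by omega) (fun j => firstCount r false j * F false t),
        firstCount_false_succ r t (by omega), add_mul, sum_mul, sum_mul, add_comm]
    · simp only [Bool.true_eq_false, and_false, false_or, and_self, true_or, if_true]
      rw [sum_ite_lt _ _ (by omega) (fun j => firstCount r true j * F true t),
        Fin.sum_univ_eq_sum_range (fun j => firstCount r false j * F true t),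
        firstCount_true_succ r t, add_mul, sum_mul, sum_mul, add_comm]

lemma card_valid (r : ℕ) :
    #(univ.filter fun p : (Fin (r + 1) → Bool) × Equiv.Perm (Fin (r + 1)) => Valid p.1 p.2) =
      ∑ i ∈ range (r + 2), (r + 1).factorial / i.factorial := by
  rw [card_filter, weighted_count r (fun _ _ => 1)]
  simp only [Fintype.sum_bool, mul_one]
  rw [Fin.sum_univ_eq_sum_range (firstCount r true), Fin.sum_univ_eq_sum_range (firstCount r false),
    sum_false_full, sum_true, sum_range_succ' _ (r + 1)]
  simp only [Nat.factorial_zero, Nat.div_one]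
  congr 1
  refine sum_congr rfl fun c hc => ?_
  rw [mem_range] at hc
  symm
  apply Nat.div_eq_of_eq_mul_left (Nat.factorial_pos _)
  rw [← Nat.choose_mul_factorial_mul_factorial (show c + 1 ≤ r + 1 by omega),
    show r + 1 - (c + 1) = r - c by omega]
  ring

/-- Only the decreasing word is valid when all letters are marked. -/
lemma valid_true_iff (f : Equiv.Perm (Fin n)) :
    Valid (fun _ => true) f ↔ f = blockPerm univ := by
  have h := Des_subset_iff (univ : Finset (Fin n)) f
  simp only [mem_univ, decide_true] at h
  rw [← h]
  constructor
  · intro hs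
    have := eq_blockPerm_of_Des f n fun i h1 h2 _ =>
      hs ((mem_Des_inv_blockPerm _).2 ⟨h1, h2, by simp⟩)
    simpa using this
  · rintro rfl i hi
    obtain ⟨h1, h2, -⟩ := mem_Des.1 hi
    exact mem_Des_blockPerm _ h1 h2 (by simp; omega)

lemma card_pairs (r : ℕ) :
    Nat.card {p : Finset (Fin (r + 1)) × Equiv.Perm (Fin (r + 1)) //
        p.1 ≠ univ ∧ Valid (fun i => decide (i ∈ p.1)) p.2} =
      ∑ i ∈ range (r + 1), (r + 1).factorial / i.factorial := by
  classical
  have hmark : Nat.card {p : Finset (Fin (r + 1)) × Equiv.Perm (Fin (r + 1)) //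
        p.1 ≠ univ ∧ Valid (fun i => decide (i ∈ p.1)) p.2} =
      #((univ.filter fun p : (Fin (r + 1) → Bool) × Equiv.Perm (Fin (r + 1)) =>
        Valid p.1 p.2).erase (fun _ => true, blockPerm univ)) := by
    rw [Nat.card_eq_fintype_card, Fintype.card_subtype]
    refine card_bij' (fun p _ => (fun i => decide (i ∈ p.1), p.2))
      (fun q _ => (univ.filter fun i => q.1 i = true, q.2)) ?_ ?_ ?_ ?_
    · rintro ⟨A, f⟩ hp
      simp only [mem_filter, mem_univ, true_and] at hp
      simp only [mem_erase, mem_filter, mem_univ, true_and]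
      refine ⟨fun h => hp.1 ?_, hp.2⟩
      ext i
      simpa using congrFun (congrArg Prod.fst h) i
    · rintro ⟨c, f⟩ hq
      simp only [mem_erase, mem_filter, mem_univ, true_and] at hq
      simp only [mem_filter, mem_univ, true_and, Bool.decide_eq_true]
      refine ⟨fun h => hq.1 ?_, hq.2⟩
      have hc : c = fun _ => true := by
        funext i
        have := h.symm ▸ mem_univ i
        simpa using this
      subst hc
      rw [(valid_true_iff f).1 hq.2]
    · rintro ⟨A, f⟩ -
      simp
    · rintro ⟨c, f⟩ -
      simp
  rw [hmark, card_erase_of_mem, card_valid, sum_range_succ _ (r + 1),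
    Nat.div_self (Nat.factorial_pos _), Nat.add_sub_cancel]
  simp [valid_true_iff]

end DescentTriples

/-- The number `b_{n,4}(Δ_{n-1})` of triples `(f,g,h)` of permutations of `{1,…,n}`
with `Des (g⁻¹) ⊆ Des f`, `Des (h⁻¹) ⊆ Des g` and `Des h ⊇ {1,…,n-2}` equals
`Σ_{i=0}^{n-1} n!/i!`. -/
theorem card_triples_normal_last_superset (n : ℕ) (hn : 1 ≤ n) :
    Nat.card {t : Equiv.Perm (Fin n) × Equiv.Perm (Fin n) × Equiv.Perm (Fin n) //
        Des t.2.1⁻¹ ⊆ Des t.1 ∧ Des t.2.2⁻¹ ⊆ Des t.2.1 ∧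
          Finset.Icc 1 (n - 2) ⊆ Des t.2.2} =
      ∑ i ∈ Finset.range n, n.factorial / i.factorial := by
  rw [DescentTriples.card_triples n hn]
  obtain ⟨r, rfl⟩ : ∃ r, n = r + 1 := ⟨n - 1, by omega⟩
  exact DescentTriples.card_pairs r
end

section
/- For every integer m ≥ 1, the following identity holds in the rationals: Σ over all compositions (p_1,…,p_k) of m (finite sequences of positive integers with p_1 + ⋯ + p_k = m) of the product ((p_1−1)/p_1!)·((p_2−1)/p_2!)·⋯·((p_{k−1}−1)/p_{k−1}!)·(p_k/p_k!) equals 1 (for k = 1 the product is just p_1/p_1!). -/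
/-!
Splitting off the first part `p` of a composition gives, for `S(m)` the sum of the weights, the
recursion `S(m) = m/m! + ∑_{p=1}^{m-1} ((p-1)/p!) S(m-p)`. By strong induction every `S(m-p)` is
`1`, and since `(p-1)/p! = 1/(p-1)! - 1/p!` the remaining sum telescopes to `1 - 1/(m-1)!`, which
is exactly complementary to the term `m/m! = 1/(m-1)!`.
-/

/-- The weight of a composition `(p₁,…,p_k)`:
`((p₁-1)/p₁!)·((p₂-1)/p₂!)·⋯·((p_{k-1}-1)/p_{k-1}!)·(p_k/p_k!)`
(for `k = 1` this is just `p₁/p₁!`, the empty product being `1`). -/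
def wq (l : List ℕ) : ℚ :=
  (l.dropLast.map fun (p : ℕ) => ((p : ℚ) - 1) / (Nat.factorial p : ℚ)).prod *
    ((l.getLastD 1 : ℚ) / (Nat.factorial (l.getLastD 1) : ℚ))

theorem wq_cons (p : ℕ) {l : List ℕ} (hl : l ≠ []) :
    wq (p :: l) = ((p : ℚ) - 1) / (Nat.factorial p : ℚ) * wq l := by
  obtain ⟨a, t, rfl⟩ := List.exists_cons_of_ne_nil hl
  simp [wq, mul_assoc]

/-- Prepending the part `i + 1` to a composition of `n - i`. -/
def consComposition (n : ℕ) (x : Σ i : Fin (n + 1), Composition (n - i)) :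
    Composition (n + 1) where
  blocks := (x.1 + 1) :: x.2.blocks
  blocks_pos := by
    intro j hj
    rcases List.mem_cons.1 hj with rfl | hj
    · omega
    · exact x.2.blocks_pos hj
  blocks_sum := by
    have := x.1.2
    rw [List.sum_cons, x.2.blocks_sum]
    omega

theorem consComposition_bijective (n : ℕ) : Function.Bijective (consComposition n) := by
  constructor
  · rintro ⟨i, c⟩ ⟨j, d⟩ h
    have hb := congrArg Composition.blocks h
    simp only [consComposition, List.cons.injEq] at hb
    obtain ⟨h1, h2⟩ := hb
    obtain rfl : i = j := by ext; omega
    obtain rfl : c = d := Composition.ext h2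
    rfl
  · rintro ⟨l, hpos, hsum⟩
    cases l with
    | nil => simp at hsum
    | cons p t =>
      have hp : 0 < p := hpos (by simp)
      rw [List.sum_cons] at hsum
      refine ⟨⟨⟨p - 1, by omega⟩, ⟨t, fun h => hpos (by simp [h]), ?_⟩⟩, ?_⟩
      · simp only
        omega
      · apply Composition.ext
        simp only [consComposition, List.cons.injEq, and_true]
        omega

theorem sum_composition_succ (n : ℕ) (f : List ℕ → ℚ) :
    ∑ c : Composition (n + 1), f c.blocks =
      ∑ i : Fin (n + 1), ∑ c : Composition (n - i), f ((i + 1) :: c.blocks) := by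
  rw [← Fintype.sum_sigma']
  exact (Fintype.sum_bijective _ (consComposition_bijective n) _ _ fun _ => rfl).symm

/-- The telescoping sum, coming from `i/(i+1)! = 1/i! - 1/(i+1)!`. -/
theorem sum_telescope (n : ℕ) :
    ∑ i : Fin n, ((i : ℕ) : ℚ) / (Nat.factorial (i + 1) : ℚ) = 1 - 1 / (Nat.factorial n : ℚ) := by
  rw [Fin.sum_univ_eq_sum_range (fun i => (i : ℚ) / (Nat.factorial (i + 1) : ℚ))]
  induction n with
  | zero => simp
  | succ n ih =>
    rw [Finset.sum_range_succ, ih, Nat.factorial_succ]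
    have := Nat.factorial_ne_zero n
    push_cast
    field_simp
    ring

/-- For every `m ≥ 1`, the sum over all compositions `(p₁,…,p_k)` of `m` of
`((p₁-1)/p₁!)·⋯·((p_{k-1}-1)/p_{k-1}!)·(p_k/p_k!)` equals `1`. -/
theorem sum_composition_weight_eq_one (m : ℕ) (hm : 1 ≤ m) :
    ∑ c : Composition m, wq c.blocks = 1 := by
  induction m using Nat.strong_induction_on with
  | _ m ih =>
    obtain ⟨n, rfl⟩ : ∃ n, m = n + 1 := ⟨m - 1, by omega⟩
    rw [sum_composition_succ, Fin.sum_univ_castSucc]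
    have hinit : ∀ i : Fin n,
        ∑ c : Composition (n - (i.castSucc : ℕ)), wq (((i.castSucc : ℕ) + 1) :: c.blocks) =
          ((i : ℕ) : ℚ) / (Nat.factorial (i + 1) : ℚ) := by
      intro i
      have hi := i.2
      rw [Fin.val_castSucc]
      have hne : ∀ c : Composition (n - i), c.blocks ≠ [] := fun c h => by
        rw [c.blocks_eq_nil] at h
        omega
      rw [Finset.sum_congr rfl fun c _ => wq_cons (i + 1) (hne c), ← Finset.mul_sum,
        ih (n - i) (by omega) (by omega)]
      simp
    have hlast : ∑ c : Composition (n - (Fin.last n : ℕ)),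
        wq (((Fin.last n : ℕ) + 1) :: c.blocks) = 1 / (Nat.factorial n : ℚ) := by
      have hnil : ∀ c : Composition (n - (Fin.last n : ℕ)), c.blocks = [] := fun c => by
        rw [c.blocks_eq_nil]
        simp
      -- There is exactly one composition of `0`, the empty one.
      have hcard : Fintype.card (Composition (n - (Fin.last n : ℕ))) = 1 := by
        simp [composition_card]
      rw [Finset.sum_congr rfl fun c _ => by rw [hnil c], Finset.sum_const, Finset.card_univ,
        hcard, one_smul]
      have := Nat.factorial_ne_zero n
      simp only [wq, Fin.val_last, List.dropLast_singleton, List.map_nil, List.prod_nil, one_mul,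
        List.getLastD_cons, List.getLastD_nil, Nat.factorial_succ]
      push_cast
      field_simp
    rw [Finset.sum_congr rfl fun i _ => hinit i, hlast, sum_telescope]
    ring
end
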